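/- Let A ∈ ℝ^{I×J}, λ > 0, P*_λ = (A Aᵀ + λ I_I)⁻¹ A, and F_λ(P) = ‖I_J − Pᵀ A‖_F² + λ‖P‖_F². Let μ_1, …, μ_J ≥ 0 be the eigenvalues (with multiplicity) of the symmetric positive semidefinite matrix Aᵀ A. Then the minimum value of F_λ is F_λ(P*_λ) = J − ∑_{j=1}^J μ_j/(μ_j + λ). (Since μ_j = 0 for eigenvalues outside the rank of A, this equals J − ∑_{r=1}^{rank(A)} σ_r²/(σ_r² + λ) where σ_r are the nonzero singular values of A.) -/

import Mathlib

open Matrix BigOperators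

/-- Squared Frobenius norm of a real matrix. -/
noncomputable def frobSq {m n : Type*} [Fintype m] [Fintype n] (M : Matrix m n ℝ) : ℝ :=
  ∑ i, ∑ j, (M i j) ^ 2

/-- The regularized objective `F_λ(P) = ‖I_J − Pᵀ A‖_F² + λ‖P‖_F²`. -/
noncomputable def Fpinv {I J : ℕ} (A : Matrix (Fin I) (Fin J) ℝ) (lam : ℝ)
    (P : Matrix (Fin I) (Fin J) ℝ) : ℝ :=
  frobSq ((1 : Matrix (Fin J) (Fin J) ℝ) - Pᵀ * A) + lam * frobSq P

/-- The regularized minimizer `P*_λ = (A Aᵀ + λ I_I)⁻¹ A`. -/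
noncomputable def PstarId {I J : ℕ} (A : Matrix (Fin I) (Fin J) ℝ) (lam : ℝ) :
    Matrix (Fin I) (Fin J) ℝ :=
  (A * Aᵀ + lam • (1 : Matrix (Fin I) (Fin I) ℝ))⁻¹ * A

/-!
Expanding the Frobenius norms gives `F_λ(P) = J − 2 tr (Pᵀ A) + tr (Pᵀ (A Aᵀ + λ) P)`, and at the
solution `P` of the normal equation `(A Aᵀ + λ) P = A` the quadratic term equals `tr (Pᵀ A)`, so
that `F_λ(P) = J − tr (Pᵀ A)`. Moving the resolvent to the other side,
`(A Aᵀ + λ)⁻¹ A = A (Aᵀ A + λ)⁻¹`, turns this trace into that of `x ↦ x / (x + λ)` applied to the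
symmetric matrix `Aᵀ A`.
-/

section PushThrough

variable {m n R : Type*} [Fintype m] [Fintype n] [DecidableEq m] [DecidableEq n] [CommRing R]

theorem inv_mul_add_smul_one_mul_comm (A : Matrix m n R) (B : Matrix n m R) (c : R)
    (hAB : IsUnit (A * B + c • 1)) (hBA : IsUnit (B * A + c • 1)) :
    (A * B + c • 1)⁻¹ * A = A * (B * A + c • 1)⁻¹ := by
  rw [isUnit_iff_isUnit_det] at hAB hBA
  have hcomm : (A * B + c • 1) * A = A * (B * A + c • 1) := by
    simp [Matrix.add_mul, Matrix.mul_add, Matrix.mul_assoc]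
  calc (A * B + c • 1)⁻¹ * A
      = (A * B + c • 1)⁻¹ * (A * (B * A + c • 1)) * (B * A + c • 1)⁻¹ := by
        rw [Matrix.mul_assoc, mul_nonsing_inv_cancel_right _ _ hBA]
    _ = A * (B * A + c • 1)⁻¹ := by
        rw [← hcomm, nonsing_inv_mul_cancel_left _ _ hAB]

end PushThrough

theorem isUnit_add_smul_one_of_posSemidef {n K : Type*} [Fintype n] [DecidableEq n] [Field K]
    [PartialOrder K] [StarRing K] [StarOrderedRing K] {M : Matrix n n K} (hM : M.PosSemidef)
    {c : K} (hc : 0 < c) : IsUnit (M + c • 1) :=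
  (PosDef.posSemidef_add hM (PosDef.one.smul hc)).isUnit

section Hermitian

variable {n 𝕜 : Type*} [Fintype n] [DecidableEq n] [RCLike 𝕜] {H : Matrix n n 𝕜}

theorem trace_cfc_eq_sum_eigenvalues (hH : H.IsHermitian) (f : ℝ → ℝ) :
    (cfc f H).trace = ∑ j, (f (hH.eigenvalues j) : 𝕜) := by
  rw [hH.cfc_eq, IsHermitian.cfc, Unitary.conjStarAlgAut_apply, trace_mul_cycle,
    Unitary.coe_star_mul_self, one_mul, trace_diagonal]
  rfl

theorem mul_inv_add_smul_one_eq_cfc (hH : H.IsHermitian) {c : ℝ} (hc : IsUnit (H + c • 1)) :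
    H * (H + c • 1)⁻¹ = cfc (fun x : ℝ ↦ x / (x + c)) H := by
  have hH' : IsSelfAdjoint H := hH
  have hne : ∀ x ∈ spectrum ℝ H, x + c ≠ 0 := by
    intro x hx hxc
    apply spectrum.zero_notMem ℝ hc
    rwa [← Algebra.algebraMap_eq_smul_one, add_comm H, ← hxc, spectrum.add_mem_add_iff]
  rw [cfc_map_div (fun x ↦ x) (fun x ↦ x + c) H hne, cfc_id' ℝ H, cfc_add_const c (fun x ↦ x) H,
    cfc_id' ℝ H, nonsing_inv_eq_ringInverse, Algebra.algebraMap_eq_smul_one]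

end Hermitian

section Frobenius

variable {m n : Type*} [Fintype m] [Fintype n]

theorem frobSq_eq_trace (M : Matrix m n ℝ) : frobSq M = (Mᵀ * M).trace := by
  simp only [frobSq, sq, trace_mul_comm Mᵀ M, ← sum_hadamard_eq, hadamard_apply]

variable [DecidableEq m] [DecidableEq n]

theorem frobSq_one_sub_add_mul_frobSq (A P : Matrix m n ℝ) (c : ℝ) :
    frobSq (1 - Pᵀ * A) + c * frobSq P =
      Fintype.card n - 2 * (Pᵀ * A).trace + (Pᵀ * ((A * Aᵀ + c • 1) * P)).trace := by
  have hsymm : (Aᵀ * P).trace = (Pᵀ * A).trace := by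
    rw [← trace_transpose, transpose_mul, transpose_transpose]
  have hcycle : (Aᵀ * P * (Pᵀ * A)).trace = (Pᵀ * (A * Aᵀ * P)).trace := by
    rw [trace_mul_comm]
    simp only [Matrix.mul_assoc]
  have hsq : frobSq (1 - Pᵀ * A) =
      Fintype.card n - 2 * (Pᵀ * A).trace + (Pᵀ * (A * Aᵀ * P)).trace := by
    simp only [frobSq_eq_trace, transpose_sub, transpose_one, transpose_mul, transpose_transpose,
      Matrix.sub_mul, Matrix.mul_sub, Matrix.one_mul, Matrix.mul_one, trace_sub, trace_one,
      hsymm, hcycle]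
    ring
  rw [hsq, frobSq_eq_trace, Matrix.add_mul, Matrix.mul_add, trace_add, Matrix.smul_mul,
    Matrix.one_mul, Matrix.mul_smul, trace_smul, smul_eq_mul, add_assoc]

theorem frobSq_one_sub_add_mul_frobSq_of_normal_eq {A P : Matrix m n ℝ} {c : ℝ}
    (hP : (A * Aᵀ + c • 1) * P = A) :
    frobSq (1 - Pᵀ * A) + c * frobSq P = Fintype.card n - (Pᵀ * A).trace := by
  rw [frobSq_one_sub_add_mul_frobSq, hP]
  ring

end Frobenius

section Minimizer

variable {I J : ℕ} {A : Matrix (Fin I) (Fin J) ℝ} {lam : ℝ}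

theorem normal_eq_PstarId (hI : IsUnit (A * Aᵀ + lam • 1)) :
    (A * Aᵀ + lam • 1) * PstarId A lam = A :=
  mul_nonsing_inv_cancel_left _ _ ((isUnit_iff_isUnit_det _).mp hI)

theorem trace_transpose_PstarId_mul (hI : IsUnit (A * Aᵀ + lam • 1))
    (hJ : IsUnit (Aᵀ * A + lam • 1)) :
    ((PstarId A lam)ᵀ * A).trace = (Aᵀ * A * (Aᵀ * A + lam • 1)⁻¹).trace := by
  rw [← trace_transpose, transpose_mul, transpose_transpose, PstarId,
    inv_mul_add_smul_one_mul_comm A Aᵀ lam hI hJ, Matrix.mul_assoc]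

theorem Fpinv_min_value_general (hI : IsUnit (A * Aᵀ + lam • 1)) (hJ : IsUnit (Aᵀ * A + lam • 1))
    (hH : (Aᵀ * A).IsHermitian) :
    Fpinv A lam (PstarId A lam) =
      (J : ℝ) - ∑ j, hH.eigenvalues j / (hH.eigenvalues j + lam) :=
  calc Fpinv A lam (PstarId A lam)
      = J - ((PstarId A lam)ᵀ * A).trace := by
        simpa [Fpinv] using frobSq_one_sub_add_mul_frobSq_of_normal_eq (normal_eq_PstarId hI)
    _ = J - (cfc (fun x : ℝ ↦ x / (x + lam)) (Aᵀ * A)).trace := by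
        rw [trace_transpose_PstarId_mul hI hJ, mul_inv_add_smul_one_eq_cfc hH hJ]
    _ = J - ∑ j, hH.eigenvalues j / (hH.eigenvalues j + lam) := by
        rw [trace_cfc_eq_sum_eigenvalues hH]
        simp only [RCLike.ofReal_real_eq_id, id_eq]

end Minimizer

/-- The minimum value of `F_λ` is `F_λ(P*_λ) = J − ∑_j μ_j/(μ_j + λ)`, where
`μ_1, …, μ_J ≥ 0` are the eigenvalues (with multiplicity) of `Aᵀ A`. -/
theorem Fpinv_min_value {I J : ℕ}
    (A : Matrix (Fin I) (Fin J) ℝ) (lam : ℝ) (hlam : 0 < lam)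
    (hH : (Aᵀ * A).IsHermitian) :
    Fpinv A lam (PstarId A lam) =
      (J : ℝ) - ∑ j, hH.eigenvalues j / (hH.eigenvalues j + lam) :=
  Fpinv_min_value_general
    (isUnit_add_smul_one_of_posSemidef (posSemidef_self_mul_conjTranspose A) hlam)
    (isUnit_add_smul_one_of_posSemidef (posSemidef_conjTranspose_mul_self A) hlam) hH
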